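/- Let Ω ⊂ ℂⁿ be a bounded convex domain all of whose boundary points are Dini-smooth, and fix z₀ ∈ Ω. If (x_n) and (y_n) are sequences in Ω with x_n → ξ and y_n → ξ for some ξ ∈ ∂Ω, then the Gromov products with respect to the Kobayashi distance satisfy (x_n | y_n)_{z₀} → ∞ as n → ∞. -/

import Mathlib

open Metric Set MeasureTheory Filter Topology

noncomputable section

variable {E : Type*} [NormedAddCommGroup E] [NormedSpace ℂ E]

/-- Distance from `x` to the boundary of `D`. -/
def bdist (D : Set E) (x : E) : ℝ := Metric.infDist x (frontier D)

/-- Distance from `x` to the boundary of `D` along the complex line `x + ℂ v`. -/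
def bdistDir (D : Set E) (x v : E) : ℝ :=
  Metric.infDist x (frontier D ∩ {w | ∃ c : ℂ, w = x + c • v})

/-- The infinitesimal Kobayashi (pseudo-)metric of `D ⊆ E`. -/
def kobMetric (D : Set E) (x v : E) : ℝ :=
  sInf { r : ℝ | ∃ (f : ℂ → E) (ξ : ℂ),
    DifferentiableOn ℂ f (ball (0:ℂ) 1) ∧ MapsTo f (ball (0:ℂ) 1) D ∧
    f 0 = x ∧ ξ • derivWithin f (ball (0:ℂ) 1) 0 = v ∧ r = ‖ξ‖ }

/-- `σ` is absolutely continuous on `[a,b]`, with a.e. derivative `g`. -/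
def IsACWithDeriv (σ g : ℝ → E) (a b : ℝ) : Prop :=
  IntervalIntegrable g volume a b ∧
  ∀ t ∈ Icc a b, σ t = σ a + ∫ s in a..t, g s

/-- The Kobayashi pseudo-distance of `D`, defined via lengths of absolutely
continuous curves (Venturini's description). -/
def kobDist (D : Set E) (x y : E) : ℝ :=
  sInf { r : ℝ | ∃ (a b : ℝ) (σ g : ℝ → E), a ≤ b ∧
    IsACWithDeriv σ g a b ∧ MapsTo σ (Icc a b) D ∧ σ a = x ∧ σ b = y ∧
    r = ∫ t in a..b, kobMetric D (σ t) (g t) }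

/-- Log-type convex domain, with explicit constants `C, ν > 0`. -/
def LogTypeConvexWith (D : Set E) (C ν : ℝ) : Prop :=
  IsOpen D ∧ D.Nonempty ∧ Bornology.IsBounded D ∧ Convex ℝ D ∧ 0 < C ∧ 0 < ν ∧
  ∀ z ∈ D, ∀ v : E, v ≠ 0 →
    bdistDir D z v ≤ C / |Real.log (bdist D z)| ^ (1 + ν)

/-- Log-type convex domain. -/
def LogTypeConvex (D : Set E) : Prop := ∃ C ν : ℝ, LogTypeConvexWith D C ν

/-- A `ℂ`-convex set: every nonempty intersection with a complex affine line is
connected and simply connected. -/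
def CConvex (D : Set E) : Prop :=
  ∀ z v : E, v ≠ 0 → (D ∩ {w | ∃ c : ℂ, w = z + c • v}).Nonempty →
    IsConnected (D ∩ {w | ∃ c : ℂ, w = z + c • v}) ∧
    SimplyConnectedSpace ↥(D ∩ {w | ∃ c : ℂ, w = z + c • v})

/-- Log-type `ℂ`-convex domain. -/
def LogTypeCConvex (D : Set E) : Prop :=
  IsOpen D ∧ D.Nonempty ∧ Bornology.IsBounded D ∧ CConvex D ∧
  ∃ C ν : ℝ, 0 < C ∧ 0 < ν ∧
    ∀ z ∈ D, ∀ v : E, v ≠ 0 →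
      bdistDir D z v ≤ C / |Real.log (bdist D z)| ^ (1 + ν)

/-- `σ : [a,b] → D` (with a.e. derivative `g`) is a `(λ,κ)`-almost geodesic for the
Kobayashi distance of `D`. -/
def AlmostGeodesicOn (D : Set E) (lam kap : ℝ) (σ g : ℝ → E) (a b : ℝ) : Prop :=
  MapsTo σ (Icc a b) D ∧ IsACWithDeriv σ g a b ∧
  (∀ s ∈ Icc a b, ∀ t ∈ Icc a b,
    (1 / lam) * |t - s| - kap ≤ kobDist D (σ s) (σ t) ∧
    kobDist D (σ s) (σ t) ≤ lam * |t - s| + kap) ∧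
  (∀ᵐ t ∂volume, t ∈ Icc a b → kobMetric D (σ t) (g t) ≤ lam)

/-- `σ : [a,b] → D` is a `C`-rough geodesic for the Kobayashi distance of `D`. -/
def RoughGeodesicOn (D : Set E) (C : ℝ) (σ : ℝ → E) (a b : ℝ) : Prop :=
  MapsTo σ (Icc a b) D ∧
  ∀ s ∈ Icc a b, ∀ t ∈ Icc a b,
    |t - s| - C ≤ kobDist D (σ s) (σ t) ∧ kobDist D (σ s) (σ t) ≤ |t - s| + C

/-- `ρ` is a `C¹` local defining function for `D` near `ξ` on the open set `W`. -/
def IsLocalDefiningFn (D : Set E) (ξ : E) (W : Set E) (ρ : E → ℝ) : Prop :=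
  IsOpen W ∧ ξ ∈ W ∧ ContDiffOn ℝ 1 ρ W ∧ (∀ x ∈ W, fderiv ℝ ρ x ≠ 0) ∧
  D ∩ W = {x ∈ W | ρ x < 0} ∧ frontier D ∩ W = {x ∈ W | ρ x = 0}

/-- `ξ` is a Dini-smooth boundary point of `D`: the boundary is `C¹` near `ξ` and the
unit normal admits a modulus of continuity `ω` satisfying the Dini condition. -/
def DiniSmoothBoundaryPoint (D : Set E) (ξ : E) : Prop :=
  ∃ (W : Set E) (ρ : E → ℝ) (ω : ℝ → ℝ),
    IsLocalDefiningFn D ξ W ρ ∧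
    (∀ t ∈ Icc (0:ℝ) 1, 0 ≤ ω t) ∧ MonotoneOn ω (Icc (0:ℝ) 1) ∧
    IntegrableOn (fun t => ω t / t) (Ioc (0:ℝ) 1) ∧
    ∀ x ∈ frontier D ∩ W, ∀ y ∈ frontier D ∩ W, ‖x - y‖ ≤ 1 →
      ‖(‖fderiv ℝ ρ x‖)⁻¹ • fderiv ℝ ρ x - (‖fderiv ℝ ρ y‖)⁻¹ • fderiv ℝ ρ y‖ ≤ ω ‖x - y‖

/-- `D` has `C^{1,ε}` boundary: near every boundary point there is a `C¹` defining
function whose differential is `ε`-Hölder. -/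
def HolderC1Boundary (D : Set E) (ε : ℝ) : Prop :=
  ∀ ξ ∈ frontier D, ∃ (W : Set E) (ρ : E → ℝ) (M : ℝ), 0 < M ∧
    IsLocalDefiningFn D ξ W ρ ∧
    ∀ x ∈ W, ∀ y ∈ W, ‖fderiv ℝ ρ x - fderiv ℝ ρ y‖ ≤ M * ‖x - y‖ ^ ε

/-- The complex affine tangent hyperplane of `∂D` at `x`, computed from a local
defining function `ρ`. -/
def complexTangentHyperplane (ρ : E → ℝ) (x : E) : Set E :=
  {w : E | fderiv ℝ ρ x (w - x) = 0 ∧ fderiv ℝ ρ x ((Complex.I : ℂ) • (w - x)) = 0}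

/-- The Gromov product of `x` and `y` with respect to the base point `o`, for the
Kobayashi distance of `D`. -/
def gromovProd (D : Set E) (o x y : E) : ℝ :=
  (kobDist D x o + kobDist D o y - kobDist D x y) / 2

end

/-!
Near a Dini-smooth boundary point, a point `x = o + δ • n` of the convex domain is joined to
`o + ε • n` by the segment along the inner normal `n` at its foot point `o`. At depth `t` the
complex normal slice of the domain contains a disc of curvature about `2 * ω (√t) / t`, and
comparing with the Poincaré metric of this disc bounds the Kobayashi metric by
`1 / (2 * t) + 3 * ω (√t) / t`. The Dini condition makes `ω (√t) / t` integrable at `0`, so the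
segment has length at most `log (ε / δ) / 2 + C` with `C` independent of `x`. Conversely,
projecting to the half-plane cut out by the tangent hyperplane at `o` shows that `x` is at
distance at least `log (d / δ) / 2` from every point of depth `d`. Two points `x` and `y` within
`ε` of `ξ` climb in this way to points at bounded distance from each other, and the depths of `x`
and `y` cancel in the Gromov product, leaving `(x | y) ≥ log (d / ε) / 2 - C'`.
-/

section DiniModulus

variable {ω : ℝ → ℝ} {t s : ℝ}

/-- A Dini modulus of continuity on `[0, 1]`, normalised to dominate the identity; by
`isDiniModulus_add_id` the normalisation costs nothing. -/
structure IsDiniModulus (ω : ℝ → ℝ) : Prop where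
  le_apply : ∀ t ∈ Icc (0 : ℝ) 1, t ≤ ω t
  monotoneOn : MonotoneOn ω (Icc 0 1)
  integrableOn_div : IntegrableOn (fun t => ω t / t) (Ioc 0 1)

lemma isDiniModulus_add_id (h0 : ∀ t ∈ Icc (0 : ℝ) 1, 0 ≤ ω t) (hmono : MonotoneOn ω (Icc 0 1))
    (hint : IntegrableOn (fun t => ω t / t) (Ioc 0 1)) : IsDiniModulus fun t => ω t + t where
  le_apply t ht := le_add_of_nonneg_left (h0 t ht)
  monotoneOn := hmono.add monotoneOn_id
  integrableOn_div := by
    refine (hint.add (integrableOn_const (C := (1 : ℝ)) (by simp))).congr_fun (fun t ht => ?_)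
      measurableSet_Ioc
    simp only [Pi.add_apply, add_div, div_self ht.1.ne']

/-- The curvature scale attached to a modulus `ω` at depth `t`: a domain whose boundary deviates
from its tangent plane by at most `ω m * m` at distance `m` contains a disc of radius about
`1 / (2 * diniSlope ω t)` through the point at depth `t`. -/
noncomputable def diniSlope (ω : ℝ → ℝ) (t : ℝ) : ℝ := ω (√t) / t

/-- Centre of the comparison disc at depth `t`, as a distance along the inner normal. -/
noncomputable def discCenter (ω : ℝ → ℝ) (t : ℝ) : ℝ := 1 / (2 * diniSlope ω t)

/-- Radius of the comparison disc at depth `t`; the disc stays at distance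
`2 * t ^ 2 * diniSlope ω t` from the boundary point. -/
noncomputable def discRadius (ω : ℝ → ℝ) (t : ℝ) : ℝ := discCenter ω t - 2 * t ^ 2 * diniSlope ω t

lemma mul_diniSlope (ht : 0 < t) : t * diniSlope ω t = ω (√t) := mul_div_cancel₀ _ ht.ne'

lemma normSq_lt_re_of_mem_ball {c a : ℝ} {ζ : ℂ} (hc : 0 < c) (ha : 0 < a)
    (hζ : ζ ∈ ball (c : ℂ) (c - a)) : ‖ζ‖ ^ 2 / (2 * c) + a / 2 < ζ.re := by
  have hlt : ‖ζ - c‖ < c - a := mem_ball_iff_norm.1 hζ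
  have hpos : 0 < c - a := (norm_nonneg _).trans_lt hlt
  have hexp : ‖ζ - c‖ ^ 2 = ‖ζ‖ ^ 2 - 2 * c * ζ.re + c ^ 2 := by
    simp only [← Complex.normSq_eq_norm_sq, Complex.normSq_apply, Complex.sub_re, Complex.sub_im,
      Complex.ofReal_re, Complex.ofReal_im]
    ring
  have hsq : ‖ζ - c‖ ^ 2 < (c - a) ^ 2 := pow_lt_pow_left₀ hlt (norm_nonneg _) two_ne_zero
  rw [div_add_div _ _ (by positivity) two_ne_zero, div_lt_iff₀ (by positivity)]
  nlinarith

namespace IsDiniModulus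

lemma integrableOn_diniSlope (hω : IsDiniModulus ω) : IntegrableOn (diniSlope ω) (Ioc 0 1) := by
  have hsub := (integrableOn_Ioi_comp_rpow_iff' ((Ioc (0 : ℝ) 1).indicator fun t => ω t / t)
    (one_half_pos (α := ℝ)).ne').2
    (hω.integrableOn_div.integrable_indicator measurableSet_Ioc).integrableOn
  refine (hsub.mono_set Ioc_subset_Ioi_self).congr_fun (fun t ht => ?_) measurableSet_Ioc
  have hmem : √t ∈ Ioc (0 : ℝ) 1 := ⟨Real.sqrt_pos.2 ht.1, Real.sqrt_le_one.2 ht.2⟩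
  have hpow : t ^ (1 / 2 - 1 : ℝ) = √t / t := by
    rw [Real.rpow_sub_one ht.1.ne', Real.sqrt_eq_rpow]
  simp only [← Real.sqrt_eq_rpow, indicator_of_mem hmem, hpow, smul_eq_mul, diniSlope]
  field_simp [hmem.1.ne']

lemma exists_apply_le (hω : IsDiniModulus ω) {ε R : ℝ} (hε : 0 < ε) (hR : 0 < R) :
    ∃ s ∈ Ioc 0 1, s ≤ R ∧ ω s ≤ ε := by
  by_contra! hbig
  have hm : 0 < min 1 R := lt_min one_pos hR
  have hinv : IntegrableOn (fun t : ℝ => t⁻¹) (Ioc 0 (min 1 R)) := by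
    refine Integrable.mono' ((hω.integrableOn_div.mono_set
      (Ioc_subset_Ioc_right (min_le_left 1 R))).const_mul ε⁻¹)
      measurable_inv.aestronglyMeasurable (ae_restrict_of_forall_mem measurableSet_Ioc ?_)
    intro t ht
    have hlt := hbig t ⟨ht.1, ht.2.trans (min_le_left 1 R)⟩ (ht.2.trans (min_le_right 1 R))
    rw [Real.norm_of_nonneg (inv_nonneg.2 ht.1.le), inv_mul_eq_div, le_div_iff₀ hε, inv_mul_eq_div]
    exact div_le_div_of_nonneg_right hlt.le ht.1.le
  rcases intervalIntegrable_inv_iff.1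
    ((intervalIntegrable_iff_integrableOn_Ioc_of_le hm.le).2 hinv) with h | h
  · exact hm.ne h
  · exact h left_mem_uIcc

variable (hω : IsDiniModulus ω)
include hω

lemma sqrt_le_mul_diniSlope (ht : t ∈ Ioc 0 1) : √t ≤ t * diniSlope ω t :=
  mul_diniSlope (ω := ω) ht.1 ▸ hω.le_apply _ ⟨Real.sqrt_nonneg t, Real.sqrt_le_one.2 ht.2⟩

lemma diniSlope_pos (ht : t ∈ Ioc 0 1) : 0 < diniSlope ω t :=
  pos_of_mul_pos_right ((Real.sqrt_pos.2 ht.1).trans_le (hω.sqrt_le_mul_diniSlope ht)) ht.1.le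

variable (hs : s ∈ Ioc 0 1) (ht : t ∈ Ioc 0 (s ^ 2))
include hs ht

lemma mul_diniSlope_le : t * diniSlope ω t ≤ ω s := by
  have hle : √t ≤ s := (Real.sqrt_le_left hs.1.le).2 ht.2
  rw [mul_diniSlope ht.1]
  exact hω.monotoneOn ⟨Real.sqrt_nonneg t, hle.trans hs.2⟩ ⟨hs.1.le, hs.2⟩ hle

lemma norm_le_and_lt_re_of_mem_ball {ζ : ℂ} (hζ : ζ ∈ ball (discCenter ω t : ℂ) (discRadius ω t)) :
    ‖ζ‖ ≤ s ∧ ω ‖ζ‖ * ‖ζ‖ < ζ.re := by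
  have ht1 : t ∈ Ioc 0 1 := ⟨ht.1, ht.2.trans (pow_le_one₀ hs.1.le hs.2)⟩
  have hV := hω.diniSlope_pos ht1
  have ht0 := ht.1
  have hdisc : diniSlope ω t * ‖ζ‖ ^ 2 + t ^ 2 * diniSlope ω t < ζ.re := by
    have h := normSq_lt_re_of_mem_ball (c := discCenter ω t) (a := 2 * t ^ 2 * diniSlope ω t)
      (by unfold discCenter; positivity) (by positivity) hζ
    unfold discCenter at h
    field_simp at h ⊢
    linarith
  have hmul : ‖ζ‖ * (t * diniSlope ω t) < t := by
    have hre := hdisc.trans_le (Complex.re_le_norm ζ)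
    nlinarith [norm_nonneg ζ, mul_pos (pow_pos ht0 2) hV]
  have hnorm : ‖ζ‖ ≤ √t := by
    refine le_of_mul_le_mul_right ?_ (Real.sqrt_pos.2 ht0)
    rw [Real.mul_self_sqrt ht0.le]
    exact (mul_le_mul_of_nonneg_left (hω.sqrt_le_mul_diniSlope ht1) (norm_nonneg ζ)).trans hmul.le
  have hω_le : ω ‖ζ‖ ≤ t * diniSlope ω t := by
    have hsqrt1 : √t ≤ 1 := Real.sqrt_le_one.2 ht1.2
    rw [mul_diniSlope ht0]
    exact hω.monotoneOn ⟨norm_nonneg ζ, hnorm.trans hsqrt1⟩ ⟨Real.sqrt_nonneg t, hsqrt1⟩ hnorm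
  refine ⟨hnorm.trans ((Real.sqrt_le_left hs.1.le).2 ht.2), ?_⟩
  calc ω ‖ζ‖ * ‖ζ‖ ≤ t * diniSlope ω t * ‖ζ‖ := by gcongr
    _ ≤ diniSlope ω t * ‖ζ‖ ^ 2 + t ^ 2 * diniSlope ω t := by
      nlinarith [mul_nonneg hV.le (sq_nonneg (‖ζ‖ - t)), mul_nonneg hV.le (sq_nonneg (‖ζ‖ + t))]
    _ < ζ.re := hdisc

variable (hωs : ω s ≤ 1 / 4)
include hωs

lemma exists_discCenter_discRadius_eq : ∃ w, 0 < w ∧ w ≤ 1 / 4 ∧ diniSlope ω t = w / t ∧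
    discCenter ω t = t / (2 * w) ∧ discRadius ω t = t / (2 * w) - 2 * t * w := by
  have ht0 := ht.1
  have hV := hω.diniSlope_pos ⟨ht0, ht.2.trans (pow_le_one₀ hs.1.le hs.2)⟩
  refine ⟨t * diniSlope ω t, by positivity, (hω.mul_diniSlope_le hs ht).trans hωs, ?_, ?_, ?_⟩
  · field_simp
  · unfold discCenter
    field_simp
  · unfold discRadius discCenter
    field_simp

lemma mem_ball_disc : (t : ℂ) ∈ ball (discCenter ω t : ℂ) (discRadius ω t) := by
  obtain ⟨w, hw, hw4, -, hc, hρ⟩ := hω.exists_discCenter_discRadius_eq hs ht hωs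
  have ht0 := ht.1
  rw [mem_ball_iff_norm, ← Complex.ofReal_sub, Complex.norm_real, Real.norm_eq_abs, hc, hρ,
    abs_sub_lt_iff]
  have hfar : 2 * t * w < t := by nlinarith
  have hnear : t + 2 * t * w < 2 * (t / (2 * w)) := by
    rw [← mul_div_assoc, lt_div_iff₀ (by positivity)]
    nlinarith [mul_pos ht0 hw]
  exact ⟨by linarith, by linarith⟩

lemma discRadius_div_le : discRadius ω t / (discRadius ω t ^ 2 - ‖(t : ℂ) - discCenter ω t‖ ^ 2) ≤
    1 / (2 * t) + 3 * diniSlope ω t := by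
  obtain ⟨w, hw, hw4, hV, hc, hρ⟩ := hω.exists_discCenter_discRadius_eq hs ht hωs
  have ht0 := ht.1
  have h2w : 0 < 1 - 2 * w := by linarith
  have hfactor : discRadius ω t ^ 2 - ‖(t : ℂ) - discCenter ω t‖ ^ 2 =
      t ^ 2 * ((1 - 2 * w) ^ 2 * (1 + w)) / w := by
    rw [← Complex.ofReal_sub, Complex.norm_real, Real.norm_eq_abs, sq_abs, hc, hρ]
    field_simp
    ring
  have hnum : discRadius ω t = t * ((1 - 2 * w) * (1 + 2 * w)) / (2 * w) := by
    rw [hρ]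
    field_simp
    ring
  have hpoly : 1 + 2 * w ≤ (1 + 6 * w) * ((1 - 2 * w) * (1 + w)) := by nlinarith [sq_nonneg w]
  calc discRadius ω t / (discRadius ω t ^ 2 - ‖(t : ℂ) - discCenter ω t‖ ^ 2)
      = (1 + 2 * w) / ((1 - 2 * w) * (1 + w)) / (2 * t) := by
        rw [hfactor, hnum]
        field_simp
    _ ≤ (1 + 6 * w) / (2 * t) := by
        gcongr
        exact (div_le_iff₀ (by positivity)).2 hpoly
    _ = 1 / (2 * t) + 3 * diniSlope ω t := by
        rw [hV]
        field_simp
        ring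

end IsDiniModulus

end DiniModulus

section KobayashiMetric

variable {E : Type*} [NormedAddCommGroup E] [NormedSpace ℂ E] {D : Set E} {x v : E}
  {f : ℂ → E} {ξ : ℂ}

/-- The analytic discs over which `kobMetric D x v` is the infimum of `‖ξ‖`. -/
structure KobCompetitor (D : Set E) (x v : E) (f : ℂ → E) (ξ : ℂ) : Prop where
  differentiableOn : DifferentiableOn ℂ f (ball 0 1)
  mapsTo : MapsTo f (ball 0 1) D
  apply_zero : f 0 = x
  smul_deriv_zero : ξ • deriv f 0 = v

lemma kobMetric_eq_sInf (D : Set E) (x v : E) :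
    kobMetric D x v = sInf {r | ∃ f ξ, KobCompetitor D x v f ξ ∧ r = ‖ξ‖} := by
  have hderiv (f : ℂ → E) : derivWithin f (ball 0 1) 0 = deriv f 0 :=
    derivWithin_of_isOpen isOpen_ball (mem_ball_self one_pos)
  refine congrArg sInf (ext fun r => ⟨?_, ?_⟩)
  · rintro ⟨f, ξ, hf, hm, h0, hd, rfl⟩
    exact ⟨f, ξ, ⟨hf, hm, h0, hderiv f ▸ hd⟩, rfl⟩
  · rintro ⟨f, ξ, h, rfl⟩
    exact ⟨f, ξ, h.differentiableOn, h.mapsTo, h.apply_zero,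
      (hderiv f).symm ▸ h.smul_deriv_zero, rfl⟩

lemma kobMetric_nonneg (D : Set E) (x v : E) : 0 ≤ kobMetric D x v := by
  rw [kobMetric_eq_sInf]
  refine Real.sInf_nonneg ?_
  rintro r ⟨f, ξ, -, rfl⟩
  exact norm_nonneg ξ

namespace KobCompetitor

lemma kobMetric_le (h : KobCompetitor D x v f ξ) : kobMetric D x v ≤ ‖ξ‖ := by
  rw [kobMetric_eq_sInf]
  refine csInf_le ⟨0, ?_⟩ ⟨f, ξ, h, rfl⟩
  rintro r ⟨g, η, -, rfl⟩
  exact norm_nonneg η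

lemma mem (h : KobCompetitor D x v f ξ) : x ∈ D :=
  h.apply_zero ▸ h.mapsTo (mem_ball_self one_pos)

lemma hasDerivAt_zero (h : KobCompetitor D x v f ξ) : HasDerivAt f (deriv f 0) 0 :=
  (h.differentiableOn.differentiableAt (ball_mem_nhds 0 one_pos)).hasDerivAt

lemma neg (h : KobCompetitor D x v f ξ) : KobCompetitor D x (-v) f (-ξ) where
  __ := h
  smul_deriv_zero := by rw [neg_smul, h.smul_deriv_zero]

lemma comp {F : Type*} [NormedAddCommGroup F] [NormedSpace ℂ F] {D' : Set F} {g : E → F}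
    (h : KobCompetitor D x v f ξ) (hD : IsOpen D) (hg : DifferentiableOn ℂ g D)
    (hgm : MapsTo g D D') : KobCompetitor D' (g x) (fderiv ℂ g x v) (g ∘ f) ξ where
  differentiableOn := hg.comp h.differentiableOn h.mapsTo
  mapsTo := hgm.comp h.mapsTo
  apply_zero := congrArg g h.apply_zero
  smul_deriv_zero := by
    have hgx : HasFDerivAt g (fderiv ℂ g x) (f 0) := by
      rw [h.apply_zero]
      exact (hg.differentiableAt (hD.mem_nhds h.mem)).hasFDerivAt
    rw [(hgx.comp_hasDerivAt 0 h.hasDerivAt_zero).deriv, ← map_smul, h.smul_deriv_zero]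

lemma const (hx : x ∈ D) (ξ : ℂ) : KobCompetitor D x 0 (fun _ => x) ξ where
  differentiableOn := differentiableOn_const x
  mapsTo _ _ := hx
  apply_zero := rfl
  smul_deriv_zero := by rw [deriv_const, smul_zero]

end KobCompetitor

lemma kobMetric_neg (D : Set E) (x v : E) : kobMetric D x (-v) = kobMetric D x v := by
  simp only [kobMetric_eq_sInf]
  refine congrArg sInf (ext fun r => ⟨?_, ?_⟩)
  · rintro ⟨f, ξ, h, rfl⟩
    exact ⟨f, -ξ, by simpa only [neg_neg] using h.neg, (norm_neg ξ).symm⟩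
  · rintro ⟨f, ξ, h, rfl⟩
    exact ⟨f, -ξ, h.neg, (norm_neg ξ).symm⟩

lemma norm_add_lt_norm_one_add_conj_mul {b ζ : ℂ} (hb : ‖b‖ < 1) (hζ : ‖ζ‖ < 1) :
    ‖ζ + b‖ < ‖1 + starRingEnd ℂ b * ζ‖ := by
  have hidentity : ‖1 + starRingEnd ℂ b * ζ‖ ^ 2 - ‖ζ + b‖ ^ 2
      = (1 - ‖b‖ ^ 2) * (1 - ‖ζ‖ ^ 2) := by
    simp only [← Complex.normSq_eq_norm_sq, Complex.normSq_apply, Complex.add_re,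
      Complex.add_im, Complex.mul_re, Complex.mul_im, Complex.conj_re, Complex.conj_im,
      Complex.one_re, Complex.one_im]
    ring
  have hb' : 0 < 1 - ‖b‖ ^ 2 := by nlinarith [norm_nonneg b]
  have hζ' : 0 < 1 - ‖ζ‖ ^ 2 := by nlinarith [norm_nonneg ζ]
  exact lt_of_pow_lt_pow_left₀ 2 (norm_nonneg _) (sub_pos.1 (hidentity ▸ mul_pos hb' hζ'))

lemma exists_kobCompetitor_complex_ball {c z : ℂ} {ρ : ℝ} (hz : z ∈ ball c ρ) (s : ℂ) :
    ∃ φ, KobCompetitor (ball c ρ) z s φ (ρ * s / ((ρ ^ 2 - ‖z - c‖ ^ 2 : ℝ) : ℂ)) := by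
  have hzc : ‖z - c‖ < ρ := mem_ball_iff_norm.1 hz
  have hρ : 0 < ρ := (norm_nonneg _).trans_lt hzc
  have hρ' : (ρ : ℂ) ≠ 0 := Complex.ofReal_ne_zero.2 hρ.ne'
  obtain ⟨b, rfl⟩ : ∃ b : ℂ, z = c + ρ * b := ⟨(z - c) / ρ, by field_simp; ring⟩
  have hnorm (w : ℂ) : ‖c + ρ * w - c‖ = ρ * ‖w‖ := by
    rw [add_sub_cancel_left, norm_mul, Complex.norm_of_nonneg hρ.le]
  have hb : ‖b‖ < 1 := by
    rw [hnorm] at hzc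
    nlinarith
  have hlt (ζ : ℂ) (hζ : ζ ∈ ball (0 : ℂ) 1) : ‖ζ + b‖ < ‖1 + starRingEnd ℂ b * ζ‖ :=
    norm_add_lt_norm_one_add_conj_mul hb (mem_ball_zero_iff.1 hζ)
  have hden (ζ : ℂ) (hζ : ζ ∈ ball (0 : ℂ) 1) : 0 < ‖1 + starRingEnd ℂ b * ζ‖ :=
    (norm_nonneg _).trans_lt (hlt ζ hζ)
  have hderiv (ζ : ℂ) (hζ : ζ ∈ ball (0 : ℂ) 1) :
      HasDerivAt (fun ζ => c + ρ * ((ζ + b) / (1 + starRingEnd ℂ b * ζ)))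
        (ρ * ((1 * (1 + starRingEnd ℂ b * ζ) - (ζ + b) * (starRingEnd ℂ b * 1)) /
          (1 + starRingEnd ℂ b * ζ) ^ 2)) ζ :=
    ((((hasDerivAt_id ζ).add_const b).div (((hasDerivAt_id ζ).const_mul _).const_add 1)
      (norm_pos_iff.1 (hden ζ hζ))).const_mul _).const_add c
  refine ⟨fun ζ => c + ρ * ((ζ + b) / (1 + starRingEnd ℂ b * ζ)),
    fun ζ hζ => (hderiv ζ hζ).differentiableAt.differentiableWithinAt, fun ζ hζ => ?_, ?_, ?_⟩
  · rw [mem_ball_iff_norm, hnorm]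
    exact mul_lt_of_lt_one_right hρ (norm_div (ζ + b) _ ▸ (div_lt_one (hden ζ hζ)).2 (hlt ζ hζ))
  · simp only [zero_add, mul_zero, add_zero, div_one]
  · rw [(hderiv 0 (mem_ball_self one_pos)).deriv, hnorm]
    have hgap : ((ρ ^ 2 - (ρ * ‖b‖) ^ 2 : ℝ) : ℂ) = ρ * (ρ * (1 - b * starRingEnd ℂ b)) := by
      rw [Complex.mul_conj']
      push_cast
      ring
    have hne : 1 - b * starRingEnd ℂ b ≠ 0 := by
      rw [Complex.mul_conj']
      have : 1 - ‖b‖ ^ 2 ≠ 0 := by nlinarith [norm_nonneg b]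
      exact_mod_cast this
    rw [hgap, smul_eq_mul]
    simp only [mul_one, mul_zero, add_zero, zero_add, one_pow, div_one]
    field_simp

lemma exists_kobCompetitor_of_slice_ball {p n : E} {c z : ℂ} {ρ : ℝ}
    (hD : ∀ ζ ∈ ball c ρ, p + ζ • n ∈ D) (hz : z ∈ ball c ρ) (s : ℂ) :
    ∃ f, KobCompetitor D (p + z • n) (s • n) f (ρ * s / ((ρ ^ 2 - ‖z - c‖ ^ 2 : ℝ) : ℂ)) := by
  obtain ⟨φ, hφ⟩ := exists_kobCompetitor_complex_ball hz s
  have hderiv : HasDerivAt (fun ζ : ℂ => p + ζ • n) n z := by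
    simpa only [one_smul] using ((hasDerivAt_id' z).smul_const n).const_add p
  have h := hφ.comp isOpen_ball (g := fun ζ : ℂ => p + ζ • n)
    ((differentiable_id.smul_const n).const_add p).differentiableOn hD
  rw [hderiv.hasFDerivAt.fderiv] at h
  exact ⟨_, by simpa only [ContinuousLinearMap.toSpanSingleton_apply] using h⟩

lemma kobMetric_le_of_slice_ball {p n : E} {c z : ℂ} {ρ : ℝ}
    (hD : ∀ ζ ∈ ball c ρ, p + ζ • n ∈ D) (hz : z ∈ ball c ρ) (s : ℂ) :
    kobMetric D (p + z • n) (s • n) ≤ ρ * ‖s‖ / (ρ ^ 2 - ‖z - c‖ ^ 2) := by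
  obtain ⟨f, hf⟩ := exists_kobCompetitor_of_slice_ball hD hz s
  have hzc : ‖z - c‖ < ρ := mem_ball_iff_norm.1 hz
  have hgap : 0 ≤ ρ ^ 2 - ‖z - c‖ ^ 2 := by nlinarith [norm_nonneg (z - c)]
  simpa only [norm_div, norm_mul, Complex.norm_of_nonneg ((norm_nonneg _).trans hzc.le),
    Complex.norm_of_nonneg hgap] using hf.kobMetric_le

lemma exists_kobCompetitor_of_ball_subset {r : ℝ} (hr : 0 < r) (hD : ball x r ⊆ D) (v : E) :
    ∃ f, KobCompetitor D x v f ((‖v‖ / r : ℝ) : ℂ) := by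
  obtain ⟨n, hn, hv⟩ : ∃ n : E, ‖n‖ ≤ 1 ∧ (‖v‖ : ℂ) • n = v := by
    rcases eq_or_ne v 0 with rfl | hv
    · exact ⟨0, by simp only [norm_zero, zero_le_one], smul_zero _⟩
    · exact ⟨(‖v‖ : ℂ)⁻¹ • v, (norm_smul_inv_norm hv).le,
        smul_inv_smul₀ (Complex.ofReal_ne_zero.2 (norm_ne_zero_iff.2 hv)) v⟩
  have hslice : ∀ ζ ∈ ball (0 : ℂ) r, x + ζ • n ∈ D := fun ζ hζ => hD <| by
    rw [mem_ball_iff_norm, add_sub_cancel_left, norm_smul]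
    nlinarith [mem_ball_zero_iff.1 hζ, norm_nonneg ζ]
  obtain ⟨f, hf⟩ := exists_kobCompetitor_of_slice_ball hslice (mem_ball_self hr) ‖v‖
  refine ⟨f, ?_⟩
  convert hf using 1
  · rw [zero_smul, add_zero]
  · exact hv.symm
  · have : (r : ℂ) ≠ 0 := Complex.ofReal_ne_zero.2 hr.ne'
    rw [sub_self, norm_zero]
    push_cast
    field_simp
    ring

lemma kobMetric_le_of_ball_subset {r : ℝ} (hr : 0 < r) (hD : ball x r ⊆ D) (v : E) :
    kobMetric D x v ≤ ‖v‖ / r := by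
  obtain ⟨f, hf⟩ := exists_kobCompetitor_of_ball_subset hr hD v
  simpa only [Complex.norm_of_nonneg (div_nonneg (norm_nonneg v) hr.le)] using hf.kobMetric_le

lemma nonempty_kobCompetitor_norms (hD : IsOpen D) (hx : x ∈ D) (v : E) :
    {r | ∃ f ξ, KobCompetitor D x v f ξ ∧ r = ‖ξ‖}.Nonempty := by
  obtain ⟨r, hr, hball⟩ := Metric.isOpen_iff.1 hD x hx
  obtain ⟨f, hf⟩ := exists_kobCompetitor_of_ball_subset hr hball v
  exact ⟨_, f, _, hf, rfl⟩

lemma norm_deriv_le_of_re_pos {h : ℂ → ℂ} {c : ℂ} {R : ℝ} (hR : 0 < R)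
    (hd : DifferentiableOn ℂ h (ball c R)) (hpos : ∀ ζ ∈ ball c R, 0 < (h ζ).re) :
    ‖deriv h c‖ ≤ 2 * (h c).re / R := by
  have hc : c ∈ ball c R := mem_ball_self hR
  have hsum (ζ : ℂ) (hζ : ζ ∈ ball c R) : h ζ + starRingEnd ℂ (h c) ≠ 0 := fun h0 => by
    have := congrArg Complex.re h0
    rw [Complex.add_re, Complex.conj_re, Complex.zero_re] at this
    linarith [hpos ζ hζ, hpos c hc]
  let cayley : ℂ → ℂ := fun ζ => (h ζ - h c) / (h ζ + starRingEnd ℂ (h c))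
  have hmaps : MapsTo cayley (ball c R) (closedBall (cayley c) 1) := fun ζ hζ => by
    have hle : ‖h ζ - h c‖ ≤ ‖h ζ + starRingEnd ℂ (h c)‖ := by
      rw [← sq_le_sq₀ (norm_nonneg _) (norm_nonneg _), ← Complex.normSq_eq_norm_sq,
        ← Complex.normSq_eq_norm_sq]
      simp only [Complex.normSq_apply, Complex.sub_re, Complex.sub_im, Complex.add_re,
        Complex.add_im, Complex.conj_re, Complex.conj_im]
      nlinarith [hpos ζ hζ, hpos c hc]
    simp only [cayley, sub_self, zero_div, mem_closedBall_zero_iff, norm_div]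
    exact div_le_one_of_le₀ hle (norm_nonneg _)
  have hschwarz : ‖deriv cayley c‖ ≤ 1 / R :=
    Complex.norm_deriv_le_div_of_mapsTo_ball ((hd.sub_const _).div (hd.add_const _) hsum) hmaps hR
  have hderiv : deriv cayley c = deriv h c / ((2 * (h c).re : ℝ) : ℂ) := by
    have hh : HasDerivAt h (deriv h c) c :=
      (hd.differentiableAt (isOpen_ball.mem_nhds hc)).hasDerivAt
    have hne := hsum c hc
    rw [((hh.sub_const _).fun_div (hh.add_const _) hne).deriv, ← Complex.add_conj]
    field_simp
    ring
  have hpos₀ : 0 < 2 * (h c).re := mul_pos two_pos (hpos c hc)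
  rw [hderiv, norm_div, Complex.norm_of_nonneg hpos₀.le, div_le_iff₀ hpos₀] at hschwarz
  exact hschwarz.trans_eq (by ring)

lemma abs_div_le_kobMetric (hD : IsOpen D) {ν : E →L[ℝ] ℝ} {b : ℝ} (hν : ∀ z ∈ D, ν z < b)
    (hx : x ∈ D) (v : E) : |ν v| / (2 * (b - ν x)) ≤ kobMetric D x v := by
  rw [kobMetric_eq_sInf]
  refine le_csInf (nonempty_kobCompetitor_norms hD hx v) ?_
  rintro r ⟨f, ξ, hf, rfl⟩
  let ℓ : E →L[ℂ] ℂ := StrongDual.extendRCLike ν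
  have hre (z : E) : (ℓ z).re = ν z := StrongDual.re_extendRCLike_apply (𝕜 := ℂ) ν z
  have hpos (z : E) (hz : z ∈ D) : 0 < ((b : ℂ) - ℓ z).re := by
    rw [Complex.sub_re, Complex.ofReal_re, hre]
    exact sub_pos.2 (hν z hz)
  have hschwarz := norm_deriv_le_of_re_pos (h := fun ζ => (b : ℂ) - ℓ (f ζ)) one_pos
    ((ℓ.differentiable.comp_differentiableOn hf.differentiableOn).const_sub _)
    fun ζ hζ => hpos _ (hf.mapsTo hζ)
  have hderiv : HasDerivAt (fun ζ => (b : ℂ) - ℓ (f ζ)) (-ℓ (deriv f 0)) 0 :=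
    (ℓ.hasFDerivAt.comp_hasDerivAt (0 : ℂ) hf.hasDerivAt_zero).const_sub (b : ℂ)
  rw [hderiv.deriv, norm_neg, div_one, Complex.sub_re, Complex.ofReal_re, hre,
    hf.apply_zero] at hschwarz
  rw [div_le_iff₀ (mul_pos two_pos (sub_pos.2 (hν x hx)))]
  calc |ν v| ≤ ‖ℓ v‖ := hre v ▸ Complex.abs_re_le_norm (ℓ v)
    _ = ‖ξ‖ * ‖ℓ (deriv f 0)‖ := by rw [← hf.smul_deriv_zero, map_smul, norm_smul]
    _ ≤ ‖ξ‖ * (2 * (b - ν x)) := mul_le_mul_of_nonneg_left hschwarz (norm_nonneg ξ)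

lemma KobCompetitor.exists_perturbation (hD : IsOpen D) (h : KobCompetitor D x v f ξ) {s : ℝ}
    (hs0 : 0 < s) (hs1 : s < 1) :
    ∃ δ > 0, ∀ y e, ‖y - x‖ + ‖e‖ < δ → ∃ F, KobCompetitor D y (v + (ξ / s) • e) F (ξ / s) := by
  have hsub : closedBall (0 : ℂ) s ⊆ ball 0 1 := closedBall_subset_ball hs1
  have hcompact : IsCompact (f '' closedBall (0 : ℂ) s) :=
    (isCompact_closedBall 0 s).image_of_continuousOn (h.differentiableOn.continuousOn.mono hsub)
  obtain ⟨δ, hδ, hthick⟩ :=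
    hcompact.exists_thickening_subset_open hD (h.mapsTo.mono_left hsub).image_subset
  have hscale (ζ : ℂ) (hζ : ζ ∈ ball (0 : ℂ) 1) : (s : ℂ) * ζ ∈ closedBall (0 : ℂ) s := by
    rw [mem_closedBall_zero_iff, norm_mul, Complex.norm_of_nonneg hs0.le]
    exact mul_le_of_le_one_right hs0.le (mem_ball_zero_iff.1 hζ).le
  have hs : (s : ℂ) ≠ 0 := Complex.ofReal_ne_zero.2 hs0.ne'
  refine ⟨δ, hδ, fun y e hye => ⟨fun ζ => f (s * ζ) + (y - x + ζ • e), ?_, ?_, ?_, ?_⟩⟩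
  · exact (h.differentiableOn.comp (by fun_prop) fun ζ hζ => hsub (hscale ζ hζ)).add (by fun_prop)
  · refine fun ζ hζ => hthick (mem_thickening_iff.2 ⟨_, mem_image_of_mem f (hscale ζ hζ), ?_⟩)
    rw [dist_eq_norm, add_sub_cancel_left]
    calc ‖y - x + ζ • e‖ ≤ ‖y - x‖ + ‖ζ‖ * ‖e‖ := norm_smul ζ e ▸ norm_add_le _ _
      _ ≤ ‖y - x‖ + ‖e‖ := by nlinarith [mem_ball_zero_iff.1 hζ, norm_nonneg e]
      _ < δ := hye
  · rw [mul_zero, h.apply_zero, zero_smul, add_zero, add_sub_cancel]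
  · have hf : HasDerivAt (fun ζ : ℂ => f (s * ζ)) ((s : ℂ) • deriv f 0) 0 := by
      have h0 : HasDerivAt f (deriv f 0) ((s : ℂ) * 0) := by
        rw [mul_zero]; exact h.hasDerivAt_zero
      exact (h0.scomp (0 : ℂ) ((hasDerivAt_id' (0 : ℂ)).const_mul (s : ℂ))).congr_deriv
        (by rw [mul_one])
    have he : HasDerivAt (fun ζ : ℂ => y - x + ζ • e) e 0 := by
      simpa only [one_smul] using ((hasDerivAt_id' (0 : ℂ)).smul_const e).const_add (y - x)
    rw [(hf.fun_add he).deriv, smul_add, smul_smul, div_mul_cancel₀ ξ hs, h.smul_deriv_zero]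

lemma exists_kobCompetitor_norm_lt (hD : IsOpen D) (hx : x ∈ D) {c : ℝ}
    (hc : kobMetric D x v < c) : ∃ f ξ, KobCompetitor D x v f ξ ∧ ξ ≠ 0 ∧ ‖ξ‖ < c := by
  have hc0 : 0 < c := (kobMetric_nonneg D x v).trans_lt hc
  rw [kobMetric_eq_sInf] at hc
  obtain ⟨-, ⟨f, ξ, hf, rfl⟩, hξc⟩ :=
    exists_lt_of_csInf_lt (nonempty_kobCompetitor_norms hD hx v) hc
  rcases eq_or_ne ξ 0 with rfl | hξ
  · obtain rfl : 0 = v := by rw [← hf.smul_deriv_zero, zero_smul]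
    refine ⟨_, ((c / 2 : ℝ) : ℂ), .const hx _, Complex.ofReal_ne_zero.2 (half_pos hc0).ne', ?_⟩
    rw [Complex.norm_of_nonneg (half_pos hc0).le]
    exact half_lt_self hc0
  · exact ⟨f, ξ, hf, hξ, hξc⟩

lemma upperSemicontinuousOn_kobMetric (hD : IsOpen D) :
    UpperSemicontinuousOn (Function.uncurry (kobMetric D)) (D ×ˢ univ) := by
  rintro ⟨x, v⟩ ⟨hx, -⟩ c hc
  obtain ⟨f, ξ, hf, hξ, hξc⟩ := exists_kobCompetitor_norm_lt hD hx hc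
  have hc0 : 0 < c := (norm_nonneg ξ).trans_lt hξc
  obtain ⟨s, hξs, hs1⟩ := exists_between ((div_lt_one hc0).2 hξc)
  have hs0 : 0 < s := (div_pos (norm_pos_iff.2 hξ) hc0).trans hξs
  have hs : (s : ℂ) ≠ 0 := Complex.ofReal_ne_zero.2 hs0.ne'
  obtain ⟨δ, hδ, hF⟩ := hf.exists_perturbation hD hs0 hs1
  have hsmall : ∀ᶠ q : E × E in 𝓝 (x, v), ‖q.1 - x‖ + ‖((s : ℂ) / ξ) • (q.2 - v)‖ < δ := by
    refine ContinuousAt.eventually_lt (by fun_prop) continuousAt_const ?_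
    simpa only [sub_self, norm_zero, smul_zero, add_zero] using hδ
  filter_upwards [mem_nhdsWithin_of_mem_nhds hsmall] with q hq
  obtain ⟨F, hF⟩ := hF _ _ hq
  rw [smul_smul, div_mul_div_cancel₀ hs, div_self hξ, one_smul, add_sub_cancel] at hF
  refine hF.kobMetric_le.trans_lt ?_
  rw [norm_div, Complex.norm_of_nonneg hs0.le, div_lt_iff₀ hs0, ← div_lt_iff₀' hc0]
  exact hξs

end KobayashiMetric

section AbsoluteContinuity

lemma absolutelyContinuousOnInterval_comp_of_lipschitzOnWith {X Y : Type*} [PseudoMetricSpace X]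
    [PseudoMetricSpace Y] {f : ℝ → X} {φ : X → Y} {s : Set X} {K : NNReal} {a b : ℝ}
    (hφ : LipschitzOnWith K φ s) (hf : AbsolutelyContinuousOnInterval f a b)
    (hfs : MapsTo f (uIcc a b) s) : AbsolutelyContinuousOnInterval (φ ∘ f) a b := by
  refine squeeze_zero' (.of_forall fun I => Finset.sum_nonneg fun i _ => dist_nonneg) ?_
    (mul_zero (K : ℝ) ▸ Tendsto.const_mul (K : ℝ) hf)
  filter_upwards [mem_inf_of_right (mem_principal_self _)] with I hI
  rw [Finset.mul_sum]
  exact Finset.sum_le_sum fun i hi =>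
    hφ.dist_le_mul _ (hfs (hI.1 i hi).1) _ (hfs (hI.1 i hi).2)

lemma lipschitzOnWith_log_Ici {c : NNReal} (hc : 0 < c) :
    LipschitzOnWith c⁻¹ Real.log (Ici (c : ℝ)) := by
  refine (convex_Ici _).lipschitzOnWith_of_nnnorm_deriv_le (𝕜 := ℝ) (fun x hx => ?_) fun x hx => ?_
  · exact Real.differentiableAt_log ((NNReal.coe_pos.2 hc).trans_le hx).ne'
  · rw [Real.deriv_log, nnnorm_inv]
    gcongr
    exact NNReal.coe_le_coe.1 ((mem_Ici.1 hx).trans (le_abs_self x))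

lemma absolutelyContinuousOnInterval_log {u : ℝ → ℝ} {a b : ℝ}
    (hu : AbsolutelyContinuousOnInterval u a b) (hpos : ∀ t ∈ uIcc a b, 0 < u t) :
    AbsolutelyContinuousOnInterval (Real.log ∘ u) a b := by
  obtain ⟨t₀, ht₀, hmin⟩ := isCompact_uIcc.exists_isMinOn nonempty_uIcc hu.continuousOn
  lift u t₀ to NNReal using (hpos t₀ ht₀).le with c hc
  have hc0 : 0 < c := NNReal.coe_pos.1 (hc ▸ hpos t₀ ht₀)
  exact absolutelyContinuousOnInterval_comp_of_lipschitzOnWith (lipschitzOnWith_log_Ici hc0) hu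
    fun t ht => hc ▸ hmin ht

lemma abs_log_sub_log_le_integral {u u' k : ℝ → ℝ} {a b : ℝ} (hab : a ≤ b)
    (hu : AbsolutelyContinuousOnInterval u a b) (hpos : ∀ t ∈ Icc a b, 0 < u t)
    (hu' : ∀ᵐ t, t ∈ uIcc a b → HasDerivAt u (u' t) t)
    (hk : IntervalIntegrable k volume a b) (hle : ∀ t ∈ Icc a b, |u' t| ≤ k t * u t) :
    |Real.log (u b) - Real.log (u a)| ≤ ∫ t in a..b, k t := by
  rw [← uIcc_of_le hab] at hpos hle
  have hftc := (absolutelyContinuousOnInterval_log hu hpos).integral_deriv_eq_sub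
  simp only [Function.comp_apply] at hftc
  rw [← hftc, ← Real.norm_eq_abs]
  refine intervalIntegral.norm_integral_le_of_norm_le hab ?_ hk
  filter_upwards [hu'] with t ht htab
  have htab' : t ∈ uIcc a b := uIcc_of_le hab ▸ Ioc_subset_Icc_self htab
  have hderiv : deriv (Real.log ∘ u) t = u' t / u t :=
    ((ht htab').log (hpos t htab').ne').deriv
  rw [hderiv, norm_div, Real.norm_eq_abs, Real.norm_of_nonneg (hpos t htab').le,
    div_le_iff₀ (hpos t htab')]
  exact hle t htab'

end AbsoluteContinuity

section PiecewiseIntegral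

variable {E : Type*} [NormedAddCommGroup E] {f g : ℝ → E} {a b c : ℝ}

lemma intervalIntegrable_piecewise_Iic (hab : a ≤ b) (hbc : b ≤ c)
    (hf : IntervalIntegrable f volume a b) (hg : IntervalIntegrable g volume b c) :
    IntervalIntegrable ((Iic b).piecewise f g) volume a c := by
  refine (hf.congr fun t ht => ?_).trans (hg.congr fun t ht => ?_)
  · rw [uIoc_of_le hab] at ht
    exact ((Iic b).piecewise_eq_of_mem f g ht.2).symm
  · rw [uIoc_of_le hbc] at ht
    exact ((Iic b).piecewise_eq_of_notMem f g (notMem_Iic.2 ht.1)).symm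

lemma integral_piecewise_Iic [NormedSpace ℝ E] (hab : a ≤ b) (hbc : b ≤ c)
    (hf : IntervalIntegrable f volume a b) (hg : IntervalIntegrable g volume b c) :
    ∫ t in a..c, (Iic b).piecewise f g t = (∫ t in a..b, f t) + ∫ t in b..c, g t := by
  have hint := intervalIntegrable_piecewise_Iic hab hbc hf hg
  have hb : b ∈ uIcc a c := Icc_subset_uIcc ⟨hab, hbc⟩
  rw [← intervalIntegral.integral_add_adjacent_intervals
    (hint.mono_set (uIcc_subset_uIcc_left hb)) (hint.mono_set (uIcc_subset_uIcc_right hb))]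
  congr 1
  · refine intervalIntegral.integral_congr_Ioo_of_le hab fun t ht => ?_
    exact (Iic b).piecewise_eq_of_mem f g ht.2.le
  · refine intervalIntegral.integral_congr_Ioo_of_le hbc fun t ht => ?_
    exact (Iic b).piecewise_eq_of_notMem f g (notMem_Iic.2 ht.1)

end PiecewiseIntegral

section Curves

variable {E : Type*} [NormedAddCommGroup E] [NormedSpace ℂ E] {σ τ g k : ℝ → E} {a b c : ℝ}

namespace IsACWithDeriv

lemma continuousOn (h : IsACWithDeriv σ g a b) (hab : a ≤ b) : ContinuousOn σ (Icc a b) := by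
  have hprim : ContinuousOn (fun t => σ a + ∫ s in a..t, g s) (uIcc a b) :=
    continuousOn_const.add
      (intervalIntegral.continuousOn_primitive_interval' h.1 left_mem_uIcc)
  exact (uIcc_of_le hab ▸ hprim).congr h.2

lemma apply_eq [CompleteSpace E] (h : IsACWithDeriv σ g a b) (ν : E →L[ℝ] ℝ) {t : ℝ}
    (ht : t ∈ Icc a b) : ν (σ t) = ν (σ a) + ∫ s in a..t, ν (g s) := by
  have hint : IntervalIntegrable g volume a t :=
    h.1.mono_set (uIcc_subset_uIcc_left (Icc_subset_uIcc ht))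
  rw [h.2 t ht, map_add, ν.intervalIntegral_comp_comm hint]

lemma comp_sub (h : IsACWithDeriv σ g a b) (d : ℝ) :
    IsACWithDeriv (fun t => σ (t - d)) (fun t => g (t - d)) (a + d) (b + d) := by
  refine ⟨h.1.comp_sub_right d, fun t ht => ?_⟩
  simp only [intervalIntegral.integral_comp_sub_right, add_sub_cancel_right]
  exact h.2 _ ⟨le_sub_iff_add_le.2 ht.1, sub_le_iff_le_add.2 ht.2⟩

lemma comp_neg (h : IsACWithDeriv σ g a b) :
    IsACWithDeriv (fun t => σ (-t)) (fun t => -g (-t)) (-b) (-a) := by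
  refine ⟨((IntervalIntegrable.iff_comp_neg enorm_ne_top).1 h.1).symm.neg, fun t ht => ?_⟩
  have hab : a ≤ b := neg_le_neg_iff.1 (ht.1.trans ht.2)
  have ht' : -t ∈ Icc a b := ⟨le_neg.2 ht.2, neg_le.2 ht.1⟩
  have hint (s : ℝ) (hs : s ∈ Icc a b) : IntervalIntegrable g volume a s :=
    h.1.mono_set (uIcc_subset_uIcc_left (Icc_subset_uIcc hs))
  simp only [intervalIntegral.integral_neg, intervalIntegral.integral_comp_neg, neg_neg]
  rw [← intervalIntegral.integral_interval_sub_left (hint b ⟨hab, le_rfl⟩) (hint _ ht'),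
    h.2 _ ht', h.2 b ⟨hab, le_rfl⟩]
  abel

lemma piecewise (hab : a ≤ b) (hbc : b ≤ c) (hσ : IsACWithDeriv σ g a b)
    (hτ : IsACWithDeriv τ k b c) (hστ : σ b = τ b) :
    IsACWithDeriv ((Iic b).piecewise σ τ) ((Iic b).piecewise g k) a c := by
  refine ⟨intervalIntegrable_piecewise_Iic hab hbc hσ.1 hτ.1, fun t ht => ?_⟩
  rw [(Iic b).piecewise_eq_of_mem σ τ hab]
  rcases le_or_gt t b with htb | hbt
  · rw [(Iic b).piecewise_eq_of_mem σ τ htb, hσ.2 t ⟨ht.1, htb⟩]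
    congr 1
    refine intervalIntegral.integral_congr_Ioo_of_le ht.1 fun s hs => ?_
    exact ((Iic b).piecewise_eq_of_mem g k (hs.2.le.trans htb)).symm
  · have hk : IntervalIntegrable k volume b t :=
      hτ.1.mono_set (uIcc_subset_uIcc_left (Icc_subset_uIcc ⟨hbt.le, ht.2⟩))
    rw [(Iic b).piecewise_eq_of_notMem σ τ (notMem_Iic.2 hbt),
      integral_piecewise_Iic hab hbt.le hσ.1 hk, hτ.2 t ⟨hbt.le, ht.2⟩, ← hστ,
      hσ.2 b ⟨hab, le_rfl⟩, add_assoc]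

end IsACWithDeriv

lemma isACWithDeriv_add_smul [CompleteSpace E] (p v : E) (a b : ℝ) :
    IsACWithDeriv (fun t => p + t • v) (fun _ => v) a b := by
  refine ⟨intervalIntegrable_const, fun t _ => ?_⟩
  rw [intervalIntegral.integral_const, sub_smul]
  module

variable {D : Set E}

lemma measurable_indicator_kobMetric [SecondCountableTopology E] [MeasurableSpace E]
    [BorelSpace E] (hD : IsOpen D) :
    Measurable ((D ×ˢ univ).indicator (Function.uncurry (kobMetric D))) := by
  have hS : MeasurableSet (D ×ˢ (univ : Set E)) := (hD.prod isOpen_univ).measurableSet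
  refine measurable_of_restrict_of_restrict_compl hS ?_ ?_
  · have hin : (D ×ˢ univ).domRestrict ((D ×ˢ univ).indicator (Function.uncurry (kobMetric D))) =
        (D ×ˢ univ).domRestrict (Function.uncurry (kobMetric D)) :=
      funext fun q => indicator_of_mem q.2 _
    rw [hin]
    exact (upperSemicontinuousOn_iff_restrict.2 (upperSemicontinuousOn_kobMetric hD)).measurable
  · have hout : (D ×ˢ univ)ᶜ.domRestrict ((D ×ˢ univ).indicator (Function.uncurry (kobMetric D))) =
        fun _ => 0 :=
      funext fun q => indicator_of_notMem q.2 _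
    rw [hout]
    exact measurable_const

lemma intervalIntegrable_kobMetric [SecondCountableTopology E] (hD : IsOpen D) (hab : a ≤ b)
    (h : IsACWithDeriv σ g a b) (hm : MapsTo σ (Icc a b) D) :
    IntervalIntegrable (fun t => kobMetric D (σ t) (g t)) volume a b := by
  borelize E
  have hσ := h.continuousOn hab
  have hg := (intervalIntegrable_iff_integrableOn_Ioc_of_le hab).1 h.1
  rw [intervalIntegrable_iff_integrableOn_Ioc_of_le hab]
  have hmeas : AEStronglyMeasurable (fun t => kobMetric D (σ t) (g t))
      (volume.restrict (Ioc a b)) := by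
    have hσg : AEMeasurable (fun t => (σ t, g t)) (volume.restrict (Ioc a b)) :=
      ((hσ.mono Ioc_subset_Icc_self).aemeasurable measurableSet_Ioc).prodMk
        hg.aestronglyMeasurable.aemeasurable
    refine ((measurable_indicator_kobMetric hD).comp_aemeasurable hσg).aestronglyMeasurable.congr
      (ae_restrict_of_forall_mem measurableSet_Ioc fun t ht => ?_)
    have hmem : (σ t, g t) ∈ D ×ˢ (univ : Set E) := ⟨hm (Ioc_subset_Icc_self ht), mem_univ _⟩
    exact indicator_of_mem hmem _
  obtain ⟨δ, hδ, hthick⟩ := (isCompact_Icc.image_of_continuousOn hσ).exists_thickening_subset_open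
    hD hm.image_subset
  refine (hg.norm.div_const δ).mono' hmeas (ae_restrict_of_forall_mem measurableSet_Ioc ?_)
  intro t ht
  rw [Real.norm_of_nonneg (kobMetric_nonneg _ _ _)]
  exact kobMetric_le_of_ball_subset hδ ((ball_subset_thickening
    (mem_image_of_mem σ (Ioc_subset_Icc_self ht)) δ).trans hthick) _

end Curves

section KobayashiDistance

variable {E : Type*} [NormedAddCommGroup E] [NormedSpace ℂ E] {D : Set E} {x y z : E}

/-- The Kobayashi lengths of absolutely continuous curves in `D` from `x` to `y`, whose infimum
is `kobDist D x y`. -/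
def kobLengths (D : Set E) (x y : E) : Set ℝ :=
  {r | ∃ (a b : ℝ) (σ g : ℝ → E), a ≤ b ∧ IsACWithDeriv σ g a b ∧ MapsTo σ (Icc a b) D ∧
    σ a = x ∧ σ b = y ∧ r = ∫ t in a..b, kobMetric D (σ t) (g t)}

lemma kobDist_eq_sInf (D : Set E) (x y : E) : kobDist D x y = sInf (kobLengths D x y) := rfl

lemma bddBelow_kobLengths (D : Set E) (x y : E) : BddBelow (kobLengths D x y) := by
  refine ⟨0, ?_⟩
  rintro - ⟨a, b, σ, g, hab, -, -, -, -, rfl⟩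
  exact intervalIntegral.integral_nonneg hab fun t _ => kobMetric_nonneg _ _ _

lemma kobLengths_subset_swap (D : Set E) (x y : E) : kobLengths D x y ⊆ kobLengths D y x := by
  rintro - ⟨a, b, σ, g, hab, h, hm, rfl, rfl, rfl⟩
  refine ⟨-b, -a, _, _, neg_le_neg hab, h.comp_neg,
    fun t ht => hm ⟨le_neg.2 ht.2, neg_le.2 ht.1⟩, by rw [neg_neg], by rw [neg_neg], ?_⟩
  simp only [kobMetric_neg]
  rw [intervalIntegral.integral_comp_neg fun t => kobMetric D (σ t) (g t), neg_neg, neg_neg]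

lemma kobDist_comm (D : Set E) (x y : E) : kobDist D x y = kobDist D y x :=
  congrArg sInf ((kobLengths_subset_swap D x y).antisymm (kobLengths_subset_swap D y x))

lemma exists_curve_from_of_mem_kobLengths {r : ℝ} (hr : r ∈ kobLengths D x y) (a : ℝ) :
    ∃ (b : ℝ) (σ g : ℝ → E), a ≤ b ∧ IsACWithDeriv σ g a b ∧ MapsTo σ (Icc a b) D ∧
      σ a = x ∧ σ b = y ∧ r = ∫ t in a..b, kobMetric D (σ t) (g t) := by
  obtain ⟨c, d, σ, g, hcd, h, hm, rfl, rfl, rfl⟩ := hr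
  refine ⟨d + (a - c), fun t => σ (t - (a - c)), fun t => g (t - (a - c)), by linarith, ?_,
    fun t ht => hm ⟨by linarith [ht.1], by linarith [ht.2]⟩, by simp only [sub_sub_cancel],
    by simp only [add_sub_cancel_right], ?_⟩
  · simpa only [add_sub_cancel] using h.comp_sub (a - c)
  · rw [intervalIntegral.integral_comp_sub_right (fun t => kobMetric D (σ t) (g t)),
      sub_sub_cancel, add_sub_cancel_right]

lemma add_mem_kobLengths [SecondCountableTopology E] (hD : IsOpen D) {r s : ℝ}
    (hr : r ∈ kobLengths D x y) (hs : s ∈ kobLengths D y z) : r + s ∈ kobLengths D x z := by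
  obtain ⟨a, b, σ, g, hab, h, hm, rfl, hσb, rfl⟩ := hr
  obtain ⟨c, τ, k, hbc, h', hm', hτb, rfl, rfl⟩ := exists_curve_from_of_mem_kobLengths hs b
  have hleft (t : ℝ) (ht : t ≤ b) : (Iic b).piecewise σ τ t = σ t := piecewise_eq_of_mem _ _ _ ht
  have hright (t : ℝ) (ht : b ≤ t) : (Iic b).piecewise σ τ t = τ t := by
    rcases ht.eq_or_lt with rfl | hlt
    · rw [hleft b le_rfl, hσb, hτb]
    · exact piecewise_eq_of_notMem _ _ _ (notMem_Iic.2 hlt)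
  refine ⟨a, c, _, _, hab.trans hbc, h.piecewise hab hbc h' (hσb.trans hτb.symm), fun t ht => ?_,
    hleft a hab, hright c hbc, ?_⟩
  · rcases le_total t b with htb | hbt
    · exact hleft t htb ▸ hm ⟨ht.1, htb⟩
    · exact hright t hbt ▸ hm' ⟨hbt, ht.2⟩
  · have hmetric (t : ℝ) : kobMetric D ((Iic b).piecewise σ τ t) ((Iic b).piecewise g k t) =
        (Iic b).piecewise (fun t => kobMetric D (σ t) (g t)) (fun t => kobMetric D (τ t) (k t)) t :=
      apply_piecewise₂ _ _ _ _ _ fun _ => kobMetric D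
    simp only [hmetric]
    rw [integral_piecewise_Iic hab hbc (intervalIntegrable_kobMetric hD hab h hm)
      (intervalIntegrable_kobMetric hD hbc h' hm')]

lemma nonempty_kobLengths [CompleteSpace E] (hD : Convex ℝ D) (hx : x ∈ D) (hy : y ∈ D) :
    (kobLengths D x y).Nonempty :=
  ⟨_, 0, 1, fun t => x + t • (y - x), fun _ => y - x, zero_le_one, isACWithDeriv_add_smul _ _ _ _,
    fun _ ht => hD.add_smul_sub_mem hx hy ht, by simp only [zero_smul, add_zero],
    by simp only [one_smul, add_sub_cancel], rfl⟩

lemma kobDist_triangle [SecondCountableTopology E] (hD : IsOpen D)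
    (hxy : (kobLengths D x y).Nonempty) (hyz : (kobLengths D y z).Nonempty) :
    kobDist D x z ≤ kobDist D x y + kobDist D y z := by
  simp only [kobDist_eq_sInf]
  rw [← csInf_add hxy (bddBelow_kobLengths D x y) hyz (bddBelow_kobLengths D y z)]
  exact csInf_le_csInf (bddBelow_kobLengths D x z) (hxy.add hyz)
    (add_subset_iff.2 fun _ hr _ hs => add_mem_kobLengths hD hr hs)

lemma kobDist_add_smul_le [CompleteSpace E] {p v : E} {a b : ℝ} {B : ℝ → ℝ} (hab : a ≤ b)
    (hm : ∀ t ∈ Icc a b, p + t • v ∈ D)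
    (hB : ∀ t ∈ Icc a b, kobMetric D (p + t • v) v ≤ B t) (hBi : IntervalIntegrable B volume a b) :
    kobDist D (p + a • v) (p + b • v) ≤ ∫ t in a..b, B t := by
  refine (csInf_le (bddBelow_kobLengths D _ _) ⟨a, b, fun t => p + t • v, fun _ => v, hab,
    isACWithDeriv_add_smul p v a b, hm, rfl, rfl, rfl⟩).trans ?_
  simp only [intervalIntegral.integral_of_le hab]
  exact integral_mono_of_nonneg (.of_forall fun t => kobMetric_nonneg _ _ _)
    ((intervalIntegrable_iff_integrableOn_Ioc_of_le hab).1 hBi)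
    (ae_restrict_of_forall_mem measurableSet_Ioc fun t ht => hB t (Ioc_subset_Icc_self ht))

lemma kobDist_le_norm_sub_div [CompleteSpace E] (hD : Convex ℝ D) {r : ℝ} (hr : 0 < r)
    (hx : ball x r ⊆ D) (hy : ball y r ⊆ D) : kobDist D x y ≤ ‖y - x‖ / r := by
  have hball (t : ℝ) (ht : t ∈ Icc (0 : ℝ) 1) : ball (x + t • (y - x)) r ⊆ D := fun w hw => by
    have hw' : ‖w - (x + t • (y - x))‖ < r := mem_ball_iff_norm.1 hw
    have hmem (q : E) : q + (w - (x + t • (y - x))) ∈ ball q r := by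
      rwa [mem_ball_iff_norm, add_sub_cancel_left]
    convert hD.add_smul_sub_mem (hx (hmem x)) (hy (hmem y)) ht using 1
    rw [add_sub_add_right_eq_sub]
    abel
  have hdist := kobDist_add_smul_le (p := x) (v := y - x) (B := fun _ => ‖y - x‖ / r) zero_le_one
    (fun t ht => hball t ht (mem_ball_self hr))
    (fun t ht => kobMetric_le_of_ball_subset hr (hball t ht) _) intervalIntegrable_const
  simpa only [zero_smul, add_zero, one_smul, add_sub_cancel, intervalIntegral.integral_const,
    sub_zero] using hdist

lemma abs_log_sub_log_div_two_le_kobDist [SecondCountableTopology E] [CompleteSpace E]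
    (hD : IsOpen D) {ν : E →L[ℝ] ℝ} {β : ℝ} (hν : ∀ z ∈ D, ν z < β)
    (hxy : (kobLengths D x y).Nonempty) :
    |Real.log (β - ν y) - Real.log (β - ν x)| / 2 ≤ kobDist D x y := by
  rw [kobDist_eq_sInf]
  refine le_csInf hxy ?_
  rintro - ⟨a, b, σ, g, hab, h, hm, rfl, rfl, rfl⟩
  have hνg : IntervalIntegrable (fun t => ν (g t)) volume a b :=
    ⟨ν.integrable_comp h.1.1, ν.integrable_comp h.1.2⟩
  have hpos (t : ℝ) (ht : t ∈ Icc a b) : 0 < β - ν (σ t) := sub_pos.2 (hν _ (hm ht))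
  let u : ℝ → ℝ := fun t => (β - ν (σ a)) - ∫ s in a..t, ν (g s)
  have hu (t : ℝ) (ht : t ∈ Icc a b) : u t = β - ν (σ t) := by
    rw [h.apply_eq ν ht, sub_add_eq_sub_sub]
  have hle (t : ℝ) (ht : t ∈ Icc a b) : |-ν (g t)| ≤ 2 * kobMetric D (σ t) (g t) * u t := by
    have hmetric := abs_div_le_kobMetric hD hν (hm ht) (g t)
    rw [div_le_iff₀ (mul_pos two_pos (hpos t ht))] at hmetric
    rw [abs_neg, hu t ht]
    linarith
  have hderiv : ∀ᵐ t, t ∈ uIcc a b → HasDerivAt u (-ν (g t)) t := by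
    filter_upwards [hνg.ae_hasDerivAt_integral] with t ht htab
    exact (ht htab a left_mem_uIcc).const_sub _
  have hac : AbsolutelyContinuousOnInterval u a b :=
    absolutelyContinuousOnInterval_comp_of_lipschitzOnWith
      ((IsometryEquiv.subLeft (β - ν (σ a))).isometry.lipschitz.lipschitzOnWith (s := univ))
      (hνg.absolutelyContinuousOnInterval_intervalIntegral left_mem_uIcc) (mapsTo_univ _ _)
  have hlog := abs_log_sub_log_le_integral hab hac (fun t ht => hu t ht ▸ hpos t ht) hderiv
    ((intervalIntegrable_kobMetric hD hab h hm).const_mul 2) hle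
  rw [hu b ⟨hab, le_rfl⟩, hu a ⟨le_rfl, hab⟩, intervalIntegral.integral_const_mul] at hlog
  linarith

end KobayashiDistance

section Supporting

lemma subset_of_isPreconnected_of_disjoint_frontier {X : Type*} [TopologicalSpace X] {S D : Set X}
    (hS : IsPreconnected S) (hD : IsOpen D) (hfr : Disjoint S (frontier D))
    (hSD : (S ∩ D).Nonempty) : S ⊆ D := by
  refine hS.subset_left_of_subset_union hD isClosed_closure.isOpen_compl
    (disjoint_compl_right_iff_subset.2 subset_closure) (fun q hq => ?_) hSD
  by_contra! hout
  exact disjoint_left.1 hfr hq (hD.frontier_eq ▸ ⟨not_not.1 fun h => hout (.inr h),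
    fun h => hout (.inl h)⟩)

variable {E : Type*} [NormedAddCommGroup E]

section Real

variable [NormedSpace ℝ E] {D : Set E} {ξ x : E}

lemma exists_frontier_ball_subset [ProperSpace E] (hD : IsOpen D) (hξ : ξ ∈ frontier D)
    (hx : x ∈ D) : ∃ o ∈ frontier D, 0 < ‖x - o‖ ∧ ‖x - o‖ ≤ ‖x - ξ‖ ∧ ball x ‖x - o‖ ⊆ D := by
  obtain ⟨o, ho, hdist⟩ := isClosed_frontier.exists_infDist_eq_dist ⟨ξ, hξ⟩ x
  rw [dist_eq_norm] at hdist
  have hle (q : E) (hq : q ∈ frontier D) : ‖x - o‖ ≤ ‖x - q‖ := by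
    rw [← hdist, ← dist_eq_norm]
    exact infDist_le_dist_of_mem hq
  have hpos : 0 < ‖x - o‖ := norm_sub_pos_iff.2 fun h => (hD.frontier_eq ▸ ho).2 (h ▸ hx)
  refine ⟨o, ho, hpos, hle ξ hξ, ?_⟩
  refine subset_of_isPreconnected_of_disjoint_frontier (convex_ball x _).isPreconnected hD
    (disjoint_left.2 fun q hq hqD => ?_) ⟨x, mem_ball_self hpos, hx⟩
  exact (hle q hqD).not_gt (norm_sub_rev x q ▸ mem_ball_iff_norm.1 hq)

lemma apply_sub_le_neg_mul_norm {ν : E →L[ℝ] ℝ} {q z : E} {r : ℝ} (hν : ∀ z ∈ D, ν (z - q) ≤ 0)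
    (hr : 0 < r) (hball : ball z r ⊆ D) : ν (z - q) ≤ -(r * ‖ν‖) := by
  by_contra! hlt
  have hquot : -ν (z - q) / r < ‖ν‖ := by
    rw [div_lt_iff₀ hr]
    linarith
  obtain ⟨w, hw, hνw⟩ := ν.exists_lt_apply_of_lt_opNorm hquot
  have hbound (s : ℝ) (hs : |s| = r) : ν (z - q) + s * ν w ≤ 0 := by
    have hmem : z + s • w ∈ ball z r := by
      rw [mem_ball_iff_norm, add_sub_cancel_left, norm_smul, Real.norm_eq_abs, hs]
      exact mul_lt_of_lt_one_right hr hw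
    have h := hν _ (hball hmem)
    rwa [add_sub_right_comm, map_add, map_smul, smul_eq_mul] at h
  rw [div_lt_iff₀ hr, Real.norm_eq_abs] at hνw
  have hadd := hbound r (abs_of_pos hr)
  have hsub := hbound (-r) ((abs_neg r).trans (abs_of_pos hr))
  rcases abs_cases (ν w) with ⟨h, -⟩ | ⟨h, -⟩ <;> rw [h] at hνw <;> linarith

lemma apply_sub_eq_neg_mul_norm {ν : E →L[ℝ] ℝ} {q z : E} (hν : ∀ z ∈ D, ν (z - q) ≤ 0)
    (hz : 0 < ‖z - q‖) (hball : ball z ‖z - q‖ ⊆ D) : ν (z - q) = -(‖z - q‖ * ‖ν‖) :=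
  (apply_sub_le_neg_mul_norm hν hz hball).antisymm
    (mul_comm ‖ν‖ _ ▸ neg_le_of_abs_le (ν.le_opNorm (z - q)))

end Real

variable [NormedSpace ℂ E] {D W : Set E} {ξ q z : E} {ρ : E → ℝ}

lemma apply_smul_eq_neg_re {ν : E →L[ℝ] ℝ} {n : E} (hν : ‖ν‖ ≤ 1) (hn : ‖n‖ ≤ 1) (hνn : ν n = -1)
    (ζ : ℂ) : ν (ζ • n) = -ζ.re := by
  let F : E →L[ℂ] ℂ := StrongDual.extendRCLike ν
  have hre (v : E) : (F v).re = ν v := StrongDual.re_extendRCLike_apply (𝕜 := ℂ) ν v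
  have hF : ‖F n‖ ≤ 1 := by
    refine (F.le_opNorm n).trans ?_
    rw [StrongDual.norm_extendRCLike]
    exact mul_le_one₀ hν (norm_nonneg n) hn
  have him : (F n).im = 0 := by
    have hsq : (F n).re * (F n).re + (F n).im * (F n).im ≤ 1 := by
      rw [← Complex.normSq_apply, Complex.normSq_eq_norm_sq]
      exact pow_le_one₀ (norm_nonneg _) hF
    rw [hre, hνn] at hsq
    nlinarith
  rw [← hre, map_smul, smul_eq_mul, Complex.mul_re, him, hre, hνn]
  ring

lemma IsLocalDefiningFn.fderiv_apply_sub_nonpos (h : IsLocalDefiningFn D ξ W ρ)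
    (hD : Convex ℝ D) (hq : q ∈ frontier D) (hqW : q ∈ W) (hz : z ∈ closure D) :
    fderiv ℝ ρ q (z - q) ≤ 0 := by
  obtain ⟨hW, -, hρ, -, hDW, hfrW⟩ := h
  have hρq : ρ q = 0 := (hfrW.subset ⟨hq, hqW⟩).2
  have hmax : IsLocalMaxOn ρ (closure D) q := by
    filter_upwards [mem_nhdsWithin_of_mem_nhds (hW.mem_nhds hqW), self_mem_nhdsWithin]
      with x hxW hx
    rw [hρq]
    rcases closure_eq_self_union_frontier D ▸ hx with hxD | hxfr
    · exact (hDW.subset ⟨hxD, hxW⟩).2.le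
    · exact (hfrW.subset ⟨hxfr, hxW⟩).2.le
  have hdiff : HasFDerivAt ρ (fderiv ℝ ρ q) q :=
    ((hρ.differentiableOn one_ne_zero).differentiableAt (hW.mem_nhds hqW)).hasFDerivAt
  exact hmax.hasFDerivWithinAt_nonpos hdiff.hasFDerivWithinAt
    (sub_mem_posTangentConeAt_of_segment_subset (hD.closure.segment_subset hq.1 hz))

end Supporting

section DiniContact

variable {E : Type*} [NormedAddCommGroup E] [NormedSpace ℂ E] {D W : Set E} {ω : ℝ → ℝ} {s : ℝ}
  {o n x z ξ : E} {ν : E →L[ℝ] ℝ} {ρ : E → ℝ}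

/-- Near its boundary point `o` the domain `D` lies on one side of the hyperplane `ν (z - o) = 0`,
and up to distance `s` its boundary leaves that hyperplane no faster than the modulus `ω` allows.
Here `n` is the inner unit normal at `o`, and `ν` the outer unit conormal. -/
structure IsDiniContact (D : Set E) (ω : ℝ → ℝ) (s : ℝ) (o n : E) (ν : E →L[ℝ] ℝ) : Prop where
  isDiniModulus : IsDiniModulus ω
  scale_mem : s ∈ Ioc 0 1
  apply_scale_le : ω s ≤ 1 / 4
  norm_normal : ‖n‖ = 1
  norm_conormal : ‖ν‖ = 1
  conormal_normal : ν n = -1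
  conormal_nonpos : ∀ z ∈ D, ν (z - o) ≤ 0
  neg_conormal_le : ∀ q ∈ frontier D, ‖q - o‖ ≤ s → -ν (q - o) ≤ ω ‖q - o‖ * ‖q - o‖

namespace IsDiniContact

variable (h : IsDiniContact D ω s o n ν)
include h

lemma conormal_smul (ζ : ℂ) : ν (ζ • n) = -ζ.re :=
  apply_smul_eq_neg_re h.norm_conormal.le h.norm_normal.le h.conormal_normal ζ

lemma norm_smul_normal (ζ : ℂ) : ‖ζ • n‖ = ‖ζ‖ := by
  rw [norm_smul, h.norm_normal, mul_one]

lemma add_smul_notMem_frontier {ζ : ℂ} (hζs : ‖ζ‖ ≤ s) (hζ : ω ‖ζ‖ * ‖ζ‖ < ζ.re) :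
    o + ζ • n ∉ frontier D := fun hfr => by
  have hle := h.neg_conormal_le _ hfr
  rw [add_sub_cancel_left, h.norm_smul_normal, h.conormal_smul, neg_neg] at hle
  exact (hle hζs).not_gt hζ

lemma add_smul_mem_of_isPreconnected (hD : IsOpen D) {S : Set ℂ} (hS : IsPreconnected S)
    (hfree : ∀ ζ ∈ S, ‖ζ‖ ≤ s ∧ ω ‖ζ‖ * ‖ζ‖ < ζ.re) {ζ₀ : ℂ} (hζ₀ : ζ₀ ∈ S)
    (hζ₀D : o + ζ₀ • n ∈ D) : ∀ ζ ∈ S, o + ζ • n ∈ D := by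
  have hcont : Continuous fun ζ : ℂ => o + ζ • n := by fun_prop
  refine image_subset_iff.1 (subset_of_isPreconnected_of_disjoint_frontier
    (hS.image _ hcont.continuousOn) hD (disjoint_left.2 ?_)
    ⟨o + ζ₀ • n, mem_image_of_mem _ hζ₀, hζ₀D⟩)
  rintro - ⟨ζ, hζ, rfl⟩
  exact h.add_smul_notMem_frontier (hfree ζ hζ).1 (hfree ζ hζ).2

lemma modulus_le {m : ℝ} (hm : m ∈ Icc 0 s) : ω m ≤ 1 / 4 :=
  (h.isDiniModulus.monotoneOn ⟨hm.1, hm.2.trans h.scale_mem.2⟩ ⟨h.scale_mem.1.le, h.scale_mem.2⟩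
    hm.2).trans h.apply_scale_le

lemma sq_scale_le : s ^ 2 ≤ s :=
  pow_le_of_le_one h.scale_mem.1.le h.scale_mem.2 two_ne_zero

variable (hD : IsOpen D) {δ t : ℝ} (hδ : δ ∈ Ioc 0 s) (hδD : o + δ • n ∈ D)
include hD hδ hδD

lemma add_smul_mem (ht : t ∈ Ioc 0 s) : o + t • n ∈ D := by
  have hfree : ∀ ζ ∈ Complex.ofReal '' Ioc 0 s, ‖ζ‖ ≤ s ∧ ω ‖ζ‖ * ‖ζ‖ < ζ.re := by
    rintro - ⟨m, hm, rfl⟩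
    have hωm := h.modulus_le ⟨hm.1.le, hm.2⟩
    rw [Complex.norm_real, Real.norm_of_nonneg hm.1.le, Complex.ofReal_re]
    exact ⟨hm.2, by nlinarith [hm.1]⟩
  have hmem := h.add_smul_mem_of_isPreconnected hD
    (isPreconnected_Ioc.image _ Complex.continuous_ofReal.continuousOn) hfree
    (mem_image_of_mem _ hδ) (by rwa [Complex.coe_smul]) t (mem_image_of_mem _ ht)
  rwa [Complex.coe_smul] at hmem

lemma kobMetric_add_smul_le (ht : t ∈ Ioc 0 (s ^ 2)) :
    kobMetric D (o + t • n) n ≤ 1 / (2 * t) + 3 * diniSlope ω t := by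
  have hball := h.isDiniModulus.mem_ball_disc h.scale_mem ht h.apply_scale_le
  have htD := h.add_smul_mem hD hδ hδD ⟨ht.1, ht.2.trans h.sq_scale_le⟩
  rw [← Complex.coe_smul] at htD ⊢
  have hdisc := h.add_smul_mem_of_isPreconnected hD (convex_ball _ _).isPreconnected
    (fun ζ hζ => h.isDiniModulus.norm_le_and_lt_re_of_mem_ball h.scale_mem ht hζ) hball htD
  have hmetric := kobMetric_le_of_slice_ball hdisc hball 1
  rw [one_smul, norm_one, mul_one] at hmetric
  exact hmetric.trans (h.isDiniModulus.discRadius_div_le h.scale_mem ht h.apply_scale_le)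

lemma kobDist_add_smul_le_log {ε : ℝ} [CompleteSpace E] (hδε : δ ≤ ε) (hε : ε ≤ s ^ 2) :
    kobDist D (o + δ • n) (o + ε • n) ≤
      Real.log (ε / δ) / 2 + 3 * ∫ t in Ioc (0 : ℝ) 1, diniSlope ω t := by
  have hsub : Ioc δ ε ⊆ Ioc 0 1 :=
    Ioc_subset_Ioc hδ.1.le (hε.trans (h.sq_scale_le.trans h.scale_mem.2))
  have hslope := h.isDiniModulus.integrableOn_diniSlope
  have hinv : IntervalIntegrable (fun t : ℝ => 1 / (2 * t)) volume δ ε := by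
    refine ContinuousOn.intervalIntegrable_of_Icc hδε fun t ht => ?_
    exact (continuousAt_const.div (continuousAt_id.const_mul 2)
      (mul_pos two_pos (hδ.1.trans_le ht.1)).ne').continuousWithinAt
  have hslope' : IntervalIntegrable (fun t => 3 * diniSlope ω t) volume δ ε :=
    ((intervalIntegrable_iff_integrableOn_Ioc_of_le hδε).2 (hslope.mono_set hsub)).const_mul 3
  have hlog : ∫ t in δ..ε, 1 / (2 * t) = Real.log (ε / δ) / 2 := by
    simp only [one_div, mul_inv, intervalIntegral.integral_const_mul]
    rw [integral_inv_of_pos hδ.1 (hδ.1.trans_le hδε), inv_mul_eq_div]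
  have hdist := kobDist_add_smul_le hδε
    (fun t ht => h.add_smul_mem hD hδ hδD ⟨hδ.1.trans_le ht.1, ht.2.trans (hε.trans h.sq_scale_le)⟩)
    (fun t ht => h.kobMetric_add_smul_le hD hδ hδD ⟨hδ.1.trans_le ht.1, ht.2.trans hε⟩)
    (hinv.add hslope')
  rw [intervalIntegral.integral_add hinv hslope', hlog, intervalIntegral.integral_const_mul,
    intervalIntegral.integral_of_le hδε] at hdist
  have hmono : ∫ t in Ioc δ ε, diniSlope ω t ≤ ∫ t in Ioc (0 : ℝ) 1, diniSlope ω t :=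
    setIntegral_mono_set hslope (ae_restrict_of_forall_mem measurableSet_Ioc fun t ht =>
      (h.isDiniModulus.diniSlope_pos ht).le) hsub.eventuallyLE
  linarith

lemma ball_add_smul_subset {ε : ℝ} (hε : 0 < ε) (hεs : 2 * ε ≤ s) :
    ball (o + ε • n) (ε / 4) ⊆ D := by
  have hεD : o + ε • n ∈ D := h.add_smul_mem hD hδ hδD ⟨hε, by linarith⟩
  refine subset_of_isPreconnected_of_disjoint_frontier (convex_ball _ _).isPreconnected hD
    (disjoint_left.2 fun q hq hfr => ?_) ⟨_, mem_ball_self (by positivity), hεD⟩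
  have hq' : ‖q - o - ε • n‖ < ε / 4 := by
    rw [sub_sub]
    exact mem_ball_iff_norm.1 hq
  have hνq := (le_abs_self _).trans (ν.le_opNorm (q - o - ε • n))
  rw [h.norm_conormal, one_mul, map_sub, map_smul, h.conormal_normal, smul_eq_mul] at hνq
  have hnorm : ‖q - o‖ ≤ 5 / 4 * ε := by
    have htri := norm_add_le (q - o - ε • n) (ε • n)
    rw [sub_add_cancel, norm_smul, h.norm_normal, Real.norm_of_nonneg hε.le] at htri
    linarith
  have hqs : ‖q - o‖ ≤ s := by linarith
  have hcontact := h.neg_conormal_le q hfr hqs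
  nlinarith [h.modulus_le ⟨norm_nonneg _, hqs⟩, norm_nonneg (q - o)]

end IsDiniContact

lemma IsDiniContact.log_div_le_kobDist [SecondCountableTopology E] [CompleteSpace E]
    (h : IsDiniContact D ω s o n ν) (hD : IsOpen D) (hconv : Convex ℝ D) {δ d : ℝ} (hδ : 0 < δ)
    (hδD : o + δ • n ∈ D) (hd : 0 < d) (hz : ball z d ⊆ D) :
    Real.log (d / δ) / 2 ≤ kobDist D (o + δ • n) z := by
  have hdepth {w : E} {r : ℝ} (hr : 0 < r) (hw : ball w r ⊆ D) : r ≤ ν o - ν w := by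
    have hle := apply_sub_le_neg_mul_norm h.conormal_nonpos hr hw
    rw [h.norm_conormal, map_sub] at hle
    linarith
  have hneg : ∀ w ∈ D, ν w < ν o := fun w hw => by
    obtain ⟨r, hr, hball⟩ := Metric.isOpen_iff.1 hD w hw
    linarith [hdepth hr hball]
  have hδν : ν o - ν (o + δ • n) = δ := by
    rw [map_add, map_smul, h.conormal_normal, smul_eq_mul]
    ring
  have hlower := abs_log_sub_log_div_two_le_kobDist hD hneg
    (nonempty_kobLengths hconv hδD (hz (mem_ball_self hd)))
  rw [hδν] at hlower
  rw [Real.log_div hd.ne' hδ.ne']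
  have hlog := Real.log_le_log hd (hdepth hd hz)
  linarith [le_abs_self (Real.log (ν o - ν z) - Real.log δ)]

/-- The outer unit conormal of the level set of `ρ` at `q`. -/
noncomputable def unitConormal (ρ : E → ℝ) (q : E) : E →L[ℝ] ℝ :=
  ‖fderiv ℝ ρ q‖⁻¹ • fderiv ℝ ρ q

namespace IsLocalDefiningFn

variable (h : IsLocalDefiningFn D ξ W ρ) {q : E}
include h

lemma norm_unitConormal (hq : q ∈ W) : ‖unitConormal ρ q‖ = 1 := by
  rw [unitConormal, norm_smul, norm_inv, norm_norm,
    inv_mul_cancel₀ (norm_ne_zero_iff.2 (h.2.2.2.1 q hq))]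

lemma unitConormal_apply_sub_nonpos (hD : Convex ℝ D) (hq : q ∈ frontier D ∩ W)
    (hz : z ∈ closure D) : unitConormal ρ q (z - q) ≤ 0 :=
  mul_nonpos_of_nonneg_of_nonpos (inv_nonneg.2 (norm_nonneg _))
    (h.fderiv_apply_sub_nonpos hD hq.1 hq.2 hz)

lemma neg_unitConormal_apply_sub_le (hD : Convex ℝ D) (ho : o ∈ frontier D) {q : E}
    (hq : q ∈ frontier D ∩ W) :
    -unitConormal ρ o (q - o) ≤ ‖unitConormal ρ q - unitConormal ρ o‖ * ‖q - o‖ := by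
  have hsupp := h.unitConormal_apply_sub_nonpos hD hq ho.1
  have hle := (le_abs_self _).trans
    ((unitConormal ρ q - unitConormal ρ o).le_opNorm (q - o))
  rw [_root_.sub_apply] at hle
  rw [← neg_sub, map_neg] at hsupp
  linarith

end IsLocalDefiningFn

lemma exists_isDiniContact [ProperSpace E] (hD : IsOpen D) (hconv : Convex ℝ D)
    (hξ : ξ ∈ frontier D) (hdini : DiniSmoothBoundaryPoint D ξ) :
    ∃ ω s, 0 < s ∧ ∀ x ∈ D, ‖x - ξ‖ < s → ∃ o n ν δ, 0 < δ ∧ δ ≤ ‖x - ξ‖ ∧ x = o + δ • n ∧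
      IsDiniContact D ω s o n ν := by
  obtain ⟨W, ρ, ω, hρ, hω0, hmono, hint, hmod⟩ := hdini
  have hω := isDiniModulus_add_id hω0 hmono hint
  obtain ⟨R, hR, hRW⟩ := Metric.isOpen_iff.1 hρ.1 ξ hρ.2.1
  obtain ⟨s, hs, hsR, hωs⟩ := hω.exists_apply_le (ε := 1 / 4) (R := R / 3) (by norm_num)
    (by positivity)
  refine ⟨fun t => ω t + t, s, hs.1, fun x hx hxξ => ?_⟩
  obtain ⟨o, ho, hpos, hoξ, hball⟩ := exists_frontier_ball_subset hD hξ hx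
  have hW {q : E} (hq : ‖q - o‖ ≤ s) : q ∈ W := by
    refine hRW (mem_ball_iff_norm.2 ?_)
    have htri := norm_sub_le_norm_sub_add_norm_sub q o ξ
    have htri' := norm_sub_le_norm_sub_add_norm_sub o x ξ
    rw [norm_sub_rev o x] at htri'
    linarith
  have hoW : o ∈ W := hW (by simpa using hs.1.le)
  have hν := hρ.norm_unitConormal hoW
  have hsupp : ∀ z ∈ D, unitConormal ρ o (z - o) ≤ 0 := fun z hz =>
    hρ.unitConormal_apply_sub_nonpos hconv ⟨ho, hoW⟩ (subset_closure hz)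
  refine ⟨o, ‖x - o‖⁻¹ • (x - o), unitConormal ρ o, ‖x - o‖, hpos, hoξ, ?_, hω, hs, hωs, ?_, hν, ?_,
    hsupp, fun q hq hqs => ?_⟩
  · rw [smul_inv_smul₀ hpos.ne', add_sub_cancel]
  · rw [norm_smul, norm_inv, norm_norm, inv_mul_cancel₀ hpos.ne']
  · rw [map_smul, apply_sub_eq_neg_mul_norm hsupp hpos hball, hν, mul_one, smul_eq_mul, mul_neg,
      inv_mul_cancel₀ hpos.ne']
  · refine (hρ.neg_unitConormal_apply_sub_le hconv ho ⟨hq, hW hqs⟩).trans ?_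
    gcongr
    exact (hmod q ⟨hq, hW hqs⟩ o ⟨ho, hoW⟩ (hqs.trans hs.2)).trans
      (le_add_of_nonneg_right (norm_nonneg _))

end DiniContact

section GromovProduct

variable {E : Type*} [NormedAddCommGroup E] [NormedSpace ℂ E] {D : Set E} {x z ξ : E}

lemma exists_deep_point_kobDist_le [ProperSpace E] (hD : IsOpen D) (hconv : Convex ℝ D)
    (hξ : ξ ∈ frontier D) (hdini : DiniSmoothBoundaryPoint D ξ) :
    ∃ r > 0, ∃ C, ∀ ε ∈ Ioc 0 r, ∀ x ∈ D, ‖x - ξ‖ < ε → ∃ p δ, 0 < δ ∧ ball p (ε / 4) ⊆ D ∧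
      ‖p - ξ‖ ≤ 2 * ε ∧ kobDist D x p ≤ Real.log (ε / δ) / 2 + C ∧
      ∀ z d, 0 < d → ball z d ⊆ D → Real.log (d / δ) / 2 ≤ kobDist D x z := by
  obtain ⟨ω, s, hs, hcontact⟩ := exists_isDiniContact hD hconv hξ hdini
  refine ⟨min (s ^ 2) (s / 2), by positivity, 3 * ∫ t in Ioc (0 : ℝ) 1, diniSlope ω t,
    fun ε ⟨hε, hεr⟩ x hx hxξ => ?_⟩
  obtain ⟨hεs2, hεs⟩ := le_min_iff.1 hεr
  obtain ⟨o, n, ν, δ, hδ, hδx, rfl, h⟩ := hcontact x hx (by linarith)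
  have hδε : δ ≤ ε := hδx.trans hxξ.le
  have hδs : δ ∈ Ioc 0 s := ⟨hδ, by linarith⟩
  refine ⟨o + ε • n, δ, hδ, h.ball_add_smul_subset hD hδs hx hε (by linarith), ?_,
    h.kobDist_add_smul_le_log hD hδs hx hδε hεs2,
    fun z d hd hz => h.log_div_le_kobDist hD hconv hδ hx hd hz⟩
  have htri := norm_add_le ((ε - δ) • n) (o + δ • n - ξ)
  rw [norm_smul, h.norm_normal, Real.norm_of_nonneg (sub_nonneg.2 hδε), mul_one,
    show (ε - δ) • n + (o + δ • n - ξ) = o + ε • n - ξ by module] at htri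
  linarith

lemma exists_log_div_sub_le_gromovProd [ProperSpace E] (hD : IsOpen D) (hconv : Convex ℝ D)
    (hξ : ξ ∈ frontier D) (hdini : DiniSmoothBoundaryPoint D ξ) :
    ∃ r > 0, ∃ C, ∀ ε ∈ Ioc 0 r, ∀ x ∈ D, ∀ y ∈ D, ‖x - ξ‖ < ε → ‖y - ξ‖ < ε →
      ∀ z d, 0 < d → ball z d ⊆ D → Real.log (d / ε) / 2 - C ≤ gromovProd D z x y := by
  obtain ⟨r, hr, C, hdeep⟩ := exists_deep_point_kobDist_le hD hconv hξ hdini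
  refine ⟨r, hr, C + 8, fun ε hε x hx y hy hxξ hyξ z d hd hz => ?_⟩
  have hε4 : 0 < ε / 4 := by linarith [hε.1]
  obtain ⟨p, δ, hδ, hpD, hpξ, hxp, hxz⟩ := hdeep ε hε x hx hxξ
  obtain ⟨q, η, hη, hqD, hqξ, hyq, hyz⟩ := hdeep ε hε y hy hyξ
  have hp := hpD (mem_ball_self hε4)
  have hq := hqD (mem_ball_self hε4)
  have hpq : kobDist D p q ≤ 16 := by
    refine (kobDist_le_norm_sub_div hconv hε4 hpD hqD).trans ((div_le_iff₀ hε4).2 ?_)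
    have htri := norm_sub_le_norm_sub_add_norm_sub q ξ p
    rw [norm_sub_rev ξ p] at htri
    linarith
  have hxy : kobDist D x y ≤ kobDist D x p + kobDist D p q + kobDist D y q := by
    have hxq := kobDist_triangle hD (nonempty_kobLengths hconv hx hp)
      (nonempty_kobLengths hconv hp hq)
    have hxy' := kobDist_triangle hD (nonempty_kobLengths hconv hx hq)
      (nonempty_kobLengths hconv hq hy)
    rw [kobDist_comm D q y] at hxy'
    linarith
  have hx' := hxz z d hd hz
  have hy' := hyz z d hd hz
  rw [gromovProd, kobDist_comm D z y, Real.log_div hd.ne' hε.1.ne']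
  rw [Real.log_div hε.1.ne' hδ.ne'] at hxp
  rw [Real.log_div hε.1.ne' hη.ne'] at hyq
  rw [Real.log_div hd.ne' hδ.ne'] at hx'
  rw [Real.log_div hd.ne' hη.ne'] at hy'
  linarith

theorem statement_9_general [FiniteDimensional ℂ E] (hD : IsOpen D) (hconv : Convex ℝ D)
    (hz : z ∈ D) (hξ : ξ ∈ frontier D) (hdini : DiniSmoothBoundaryPoint D ξ) :
    Tendsto (fun q : E × E => gromovProd D z q.1 q.2) (𝓝[D] ξ ×ˢ 𝓝[D] ξ) atTop := by
  have : ProperSpace E := FiniteDimensional.proper_rclike ℂ E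
  obtain ⟨r, hr, C, hgromov⟩ := exists_log_div_sub_le_gromovProd hD hconv hξ hdini
  obtain ⟨d, hd, hball⟩ := Metric.isOpen_iff.1 hD z hz
  refine tendsto_atTop.2 fun M => ?_
  let ε := min r (d / Real.exp (2 * (M + C)))
  have hε : 0 < ε := lt_min hr (by positivity)
  have hM : 2 * (M + C) ≤ Real.log (d / ε) :=
    (Real.le_log_iff_exp_le (by positivity)).2
      ((le_div_comm₀ hε (Real.exp_pos _)).1 (min_le_right _ _))
  have hnear : ∀ᶠ x in 𝓝[D] ξ, x ∈ D ∧ ‖x - ξ‖ < ε := by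
    filter_upwards [self_mem_nhdsWithin, mem_nhdsWithin_of_mem_nhds (ball_mem_nhds ξ hε)]
      with x hx hxξ using ⟨hx, mem_ball_iff_norm.1 hxξ⟩
  filter_upwards [hnear.prod_mk hnear] with q ⟨⟨hxD, hxξ⟩, hyD, hyξ⟩
  have hle := hgromov ε ⟨hε, min_le_left _ _⟩ _ hxD _ hyD hxξ hyξ z d hd hball
  linarith

end GromovProduct

theorem statement_9 {n : ℕ}
    (Ω : Set (EuclideanSpace ℂ (Fin n)))
    (hΩo : IsOpen Ω) (hne : Ω.Nonempty) (hΩb : Bornology.IsBounded Ω)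
    (hconv : Convex ℝ Ω)
    (hdini : ∀ x ∈ frontier Ω, DiniSmoothBoundaryPoint Ω x)
    (z₀ : EuclideanSpace ℂ (Fin n)) (hz₀ : z₀ ∈ Ω)
    (ξ : EuclideanSpace ℂ (Fin n)) (hξ : ξ ∈ frontier Ω)
    (x y : ℕ → EuclideanSpace ℂ (Fin n)) (hx : ∀ k, x k ∈ Ω) (hy : ∀ k, y k ∈ Ω)
    (hxlim : Tendsto x atTop (𝓝 ξ)) (hylim : Tendsto y atTop (𝓝 ξ)) :
    Tendsto (fun k => gromovProd Ω z₀ (x k) (y k)) atTop atTop := by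
  have hxy := (tendsto_nhdsWithin_iff.2 ⟨hxlim, .of_forall hx⟩).prodMk
    (tendsto_nhdsWithin_iff.2 ⟨hylim, .of_forall hy⟩)
  exact (statement_9_general hΩo hconv hz₀ hξ (hdini ξ hξ)).comp (f := fun k => (x k, y k)) hxy
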